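/- Let k be a fixed positive integer, let A<1 be a fixed constant, and let m:ℕ→ℕ satisfy m(n) ≤ An for all n. Then limsup_{n→∞} of the probability that P_{n,m(n)} contains a cycle of length at most k is strictly less than 1. -/

import Mathlib

/-!
Planar graphs are bridge-addable: a bridge between two components cannot create a minor of a
2-connected graph, such as `K₅` or `K₃,₃`. If `m ≤ A n`, a graph with `n` vertices and `m - 1` edges
has at least `(1 - A) n² / 2` pairs of vertices in different components, so double counting the ways
to add a bridge shows that going from `m` to `m - 1` edges multiplies the size of a bridge-addable
class by at most `q / n`, where `q = 2 / (1 - A)`. Planar graphs without cycles of length at most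
`k` are bridge-addable too, since a bridge lies on no cycle.

From a planar graph with `m` edges, delete the edges of a maximal family `𝒞` of pairwise
edge-disjoint cycles of length at most `k`: no cycle of length at most `k` remains. Hence, for a
given `𝒞`, the number of these graphs is at most `(q / n) ^ |⋃ 𝒞|` times the number `N` of planar
graphs with `m` edges and no cycle of length at most `k`. There are at most `n ^ r` cycles of
length `r` on `n` vertices, so summing over `𝒞` bounds the number of all planar graphs with `m`
edges by `N ∏_C (1 + (q / n) ^ |C|) ≤ N exp (∑_{r ≤ k} q ^ r)`. So there is no short cycle with
probability at least `exp (-∑_{r ≤ k} q ^ r)`, for every `n`.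
-/

open SimpleGraph Filter Asymptotics

/-- `H` is a minor of `G`: to each vertex of `H` we can assign a connected nonempty
branch set in `G`, pairwise disjoint, with an edge of `G` between the branch sets of
any two adjacent vertices of `H`. -/
def IsMinor {α β : Type*} (H : SimpleGraph α) (G : SimpleGraph β) : Prop :=
  ∃ f : α → Set β,
    (∀ a, (G.induce (f a)).Connected) ∧
    (∀ a b, a ≠ b → Disjoint (f a) (f b)) ∧
    (∀ a b, H.Adj a b → ∃ u ∈ f a, ∃ v ∈ f b, G.Adj u v)

/-- A graph is planar iff it has neither a `K₅`-minor nor a `K₃,₃`-minor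
(Wagner's theorem). -/
def IsPlanar {V : Type*} (G : SimpleGraph V) : Prop :=
  ¬ IsMinor (completeGraph (Fin 5)) G ∧
    ¬ IsMinor (completeBipartiteGraph (Fin 3) (Fin 3)) G

/-- The number of edges of a graph. -/
noncomputable def edgeCount {V : Type*} (G : SimpleGraph V) : ℕ :=
  G.edgeSet.ncard

/-- The degree of a vertex. -/
noncomputable def vertexDegree {V : Type*} (G : SimpleGraph V) (v : V) : ℕ :=
  (G.neighborSet v).ncard

/-- `𝒫(n,m)`: the set of labelled planar graphs on `{1,…,n}` with exactly `m` edges. -/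
def planarSet (n m : ℕ) : Set (SimpleGraph (Fin n)) :=
  {G | IsPlanar G ∧ edgeCount G = m}

/-- The probability that the uniform random planar graph `P_{n,m}` satisfies `P`. -/
noncomputable def planarProb (n m : ℕ) (P : SimpleGraph (Fin n) → Prop) : ℝ :=
  ({G ∈ planarSet n m | P G}.ncard : ℝ) / ((planarSet n m).ncard : ℝ)

/-- The number of pendant edges (edges incident to a vertex of degree 1). -/
noncomputable def pendantCount {V : Type*} (G : SimpleGraph V) : ℕ :=
  {e ∈ G.edgeSet | ∃ v ∈ e, vertexDegree G v = 1}.ncard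

/-- The set of addable non-edges of `G`: non-edges whose addition keeps the graph planar. -/
def addableSet {V : Type*} (G : SimpleGraph V) : Set (Sym2 V) :=
  {e | ¬ e.IsDiag ∧ e ∉ G.edgeSet ∧ IsPlanar (G ⊔ SimpleGraph.fromEdgeSet {e})}

/-- `add(n,m)`: the minimum number of addable non-edges over all graphs in `𝒫(n,m)`. -/
noncomputable def addMin (n m : ℕ) : ℕ :=
  sInf ((fun G => (addableSet G).ncard) '' planarSet n m)

/-- `W` carries an induced order-preserving copy of `H` in `G`: the increasing bijection
from `{1,…,h}` to `W` is an isomorphism between `H` and the induced subgraph `G[W]`. -/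
def IsOrderCopy {h n : ℕ} (H : SimpleGraph (Fin h)) (G : SimpleGraph (Fin n))
    (W : Finset (Fin n)) : Prop :=
  ∃ hW : W.card = h,
    ∀ i j : Fin h,
      H.Adj i j ↔ G.Adj ((W.orderIsoOfFin hW i : Fin n)) ((W.orderIsoOfFin hW j : Fin n))

/-- `W` is the vertex set of a connected component of `G`. -/
def IsComponent {V : Type*} (G : SimpleGraph V) (W : Finset V) : Prop :=
  (G.induce (W : Set V)).Connected ∧ ∀ v ∈ W, ∀ u, G.Adj v u → u ∈ W

/-- The number of components of `G` admitting an order-preserving isomorphism to `H`. -/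
noncomputable def numOrderComponents {h n : ℕ} (H : SimpleGraph (Fin h))
    (G : SimpleGraph (Fin n)) : ℕ :=
  {W : Finset (Fin n) | IsComponent G W ∧ IsOrderCopy H G W}.ncard

/-- The number of distinct cycles (as subgraphs, identified with their edge sets) of
length at most `k` in `S`. -/
noncomputable def cycleCountLe {V : Type*} (S : SimpleGraph V) (k : ℕ) : ℕ :=
  {E : Set (Sym2 V) | ∃ (v : V) (c : S.Walk v v),
    c.IsCycle ∧ c.length ≤ k ∧ {e | e ∈ c.edges} = E}.ncard

section Minors

variable {α β : Type*} {H : SimpleGraph α} {G G' : SimpleGraph β} {f : α → Set β} {u v : β}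

/-- `f` is a model of `H` in `G`, that is, a family of branch sets witnessing that `H` is a minor
of `G`. -/
structure IsMinorModel (H : SimpleGraph α) (G : SimpleGraph β) (f : α → Set β) : Prop where
  connected (a : α) : (G.induce (f a)).Connected
  disjoint (a b : α) : a ≠ b → Disjoint (f a) (f b)
  exists_adj (a b : α) : H.Adj a b → ∃ x ∈ f a, ∃ y ∈ f b, G.Adj x y

lemma isMinor_iff_exists_isMinorModel : IsMinor H G ↔ ∃ f, IsMinorModel H G f :=
  ⟨fun ⟨f, hconn, hdisj, hadj⟩ => ⟨f, hconn, hdisj, hadj⟩,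
    fun ⟨f, hf⟩ => ⟨f, hf.connected, hf.disjoint, hf.exists_adj⟩⟩

namespace IsMinorModel

lemma mono (hf : IsMinorModel H G f) (hle : G ≤ G') : IsMinorModel H G' f where
  connected a := (hf.connected a).mono (comap_monotone _ hle)
  disjoint := hf.disjoint
  exists_adj a b hab :=
    let ⟨x, hx, y, hy, hxy⟩ := hf.exists_adj a b hab
    ⟨x, hx, y, hy, hle hxy⟩

lemma eq_of_mem (hf : IsMinorModel H G f) {a b : α} {x : β} (ha : x ∈ f a) (hb : x ∈ f b) :
    a = b :=
  not_not.1 fun hab => Set.disjoint_left.1 (hf.disjoint a b hab) ha hb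

lemma nonempty (hf : IsMinorModel H G f) (a : α) : (f a).Nonempty :=
  Set.nonempty_coe_sort.1 (hf.connected a).nonempty

lemma induce (hf : IsMinorModel H G f) (s : Set α) :
    IsMinorModel (H.induce s) G fun a : s => f a where
  connected a := hf.connected a
  disjoint a b hab := hf.disjoint a b (Subtype.coe_ne_coe.2 hab)
  exists_adj a b hab := hf.exists_adj a b hab

lemma reachable (hf : IsMinorModel H G f) (hH : H.Preconnected) {a b : α} {x y : β}
    (hx : x ∈ f a) (hy : y ∈ f b) : G.Reachable x y := by
  have reachable_of_mem {c : α} {z w : β} (hz : z ∈ f c) (hw : w ∈ f c) : G.Reachable z w :=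
    ((hf.connected c).preconnected ⟨z, hz⟩ ⟨w, hw⟩).map (Embedding.induce (f c)).toHom
  obtain ⟨p⟩ := hH a b
  induction p generalizing x with
  | nil => exact reachable_of_mem hx hy
  | cons hac _ ih =>
    obtain ⟨z, hz, w, hw, hzw⟩ := hf.exists_adj _ _ hac
    exact (reachable_of_mem hx hz).trans (hzw.reachable.trans (ih hw hy))

end IsMinorModel

lemma IsMinor.mono (h : IsMinor H G) (hle : G ≤ G') : IsMinor H G' := by
  rw [isMinor_iff_exists_isMinorModel] at h ⊢
  exact h.imp fun _ hf => hf.mono hle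

lemma adj_of_sup_edge_adj {x y : β} (h : (G ⊔ edge u v).Adj x y) (hx : x ≠ u) (hy : y ≠ u) :
    G.Adj x y := by
  rw [sup_adj, edge_adj] at h
  tauto

namespace IsMinorModel

lemma of_sup_edge (hf : IsMinorModel H (G ⊔ edge u v) f) (hu : ∀ a, u ∉ f a) :
    IsMinorModel H G f where
  connected a := (hf.connected a).mono fun x y hxy =>
    comap_adj.2 <| adj_of_sup_edge_adj (comap_adj.1 hxy) (ne_of_mem_of_not_mem x.2 (hu a))
      (ne_of_mem_of_not_mem y.2 (hu a))
  disjoint := hf.disjoint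
  exists_adj a b hab :=
    let ⟨x, hx, y, hy, hxy⟩ := hf.exists_adj a b hab
    ⟨x, hx, y, hy, adj_of_sup_edge_adj hxy (ne_of_mem_of_not_mem hx (hu a))
      (ne_of_mem_of_not_mem hy (hu b))⟩

lemma reachable_of_sup_edge (hf : IsMinorModel H (G ⊔ edge u v) f) {p a b : α}
    (hp : (H.induce {p}ᶜ).Preconnected) (hu : u ∈ f p) (ha : a ≠ p) (hb : b ≠ p) {x y : β}
    (hx : x ∈ f a) (hy : y ∈ f b) : G.Reachable x y :=
  ((hf.induce {p}ᶜ).of_sup_edge fun c huc => c.2 (hf.eq_of_mem huc hu)).reachable hp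
    (a := ⟨a, ha⟩) (b := ⟨b, hb⟩) hx hy

end IsMinorModel

-- Collapsing the component of `u` onto `v` turns walks in `s` into walks avoiding that component.
lemma connected_induce_inter_of_sup_edge (huv : ¬ G.Reachable u v) {s : Set β}
    (hs : ((G ⊔ edge u v).induce s).Connected) (hv : ∀ x ∈ s, G.Reachable u x → v ∈ s) :
    (G.induce (s ∩ {x | ¬ G.Reachable u x})).Connected := by
  classical
  set t := s ∩ {x | ¬ G.Reachable u x}
  let ρ (x : s) : t :=
    if hx : G.Reachable u x then ⟨v, hv x x.2 hx, huv⟩ else ⟨x, x.2, hx⟩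
  have reachable_of_adj (x y : s) (hxy : ((G ⊔ edge u v).induce s).Adj x y) :
      (G.induce t).Reachable (ρ x) (ρ y) := by
    rcases sup_adj _ _ _ _ |>.1 (comap_adj.1 hxy) with h | h
    · have hiff : G.Reachable u x ↔ G.Reachable u y :=
        ⟨fun hx => hx.trans h.reachable, fun hy => hy.trans h.symm.reachable⟩
      by_cases hx : G.Reachable u x
      · simp [ρ, hx, hiff.1 hx]
      · refine Adj.reachable ?_
        simpa [ρ, hx, hiff.not.1 hx] using h
    · obtain ⟨⟨hx, hy⟩ | ⟨hx, hy⟩, -⟩ := edge_adj .. |>.1 h <;>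
        simp_all [ρ]
  have hρ (x : t) : ρ ⟨x, x.2.1⟩ = x := dif_neg x.2.2
  have reachable (x y : s) (hxy : ((G ⊔ edge u v).induce s).Reachable x y) :
      (G.induce t).Reachable (ρ x) (ρ y) := by
    simp only [reachable_iff_reflTransGen] at *
    exact hxy.lift' ρ reachable_of_adj
  have : Nonempty t := hs.nonempty.map ρ
  exact ⟨fun x y => hρ x ▸ hρ y ▸ reachable _ _ (hs.preconnected ⟨x, x.2.1⟩ ⟨y, y.2.1⟩)⟩

lemma IsMinorModel.inter_of_sup_edge (hf : IsMinorModel H (G ⊔ edge u v) f)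
    (huv : ¬ G.Reachable u v) {p : α} (hu : u ∈ f p) (hv : v ∈ f p)
    (hsep : ∀ a ≠ p, ∀ x ∈ f a, ¬ G.Reachable u x) :
    IsMinorModel H G fun a => f a ∩ {x | ¬ G.Reachable u x} where
  connected a := connected_induce_inter_of_sup_edge huv (hf.connected a) fun x hx hux => by
    rwa [not_imp_comm.1 (hsep a · x hx) (not_not.2 hux)]
  disjoint a b hab := (hf.disjoint a b hab).mono Set.inter_subset_left Set.inter_subset_left
  exists_adj a b hab := by
    obtain ⟨x, hx, y, hy, hxy⟩ := hf.exists_adj a b hab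
    have hxy : G.Adj x y := by
      obtain h | ⟨⟨rfl, rfl⟩ | ⟨rfl, rfl⟩, -⟩ := sup_adj .. |>.1 hxy |>.imp_right (edge_adj ..).1
      · exact h
      · exact absurd ((hf.eq_of_mem hx hu).trans (hf.eq_of_mem hv hy)) hab.ne
      · exact absurd ((hf.eq_of_mem hx hv).trans (hf.eq_of_mem hu hy)) hab.ne
    have hiff : G.Reachable u x ↔ G.Reachable u y :=
      ⟨fun h => h.trans hxy.reachable, fun h => h.trans hxy.symm.reachable⟩
    have hux : ¬ G.Reachable u x := by
      by_cases ha : a = p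
      · exact hiff.not.2 (hsep b (fun hb => hab.ne (ha.trans hb.symm)) y hy)
      · exact hsep a ha x hx
    exact ⟨x, ⟨hx, hux⟩, y, ⟨hy, hiff.not.1 hux⟩, hxy⟩

/-- `H` is 2-connected: it has at least three vertices, and no vertex separates it. -/
structure IsTwoConnected (H : SimpleGraph α) : Prop where
  three_le_card : 3 ≤ ENat.card α
  preconnected_induce_compl (p : α) : (H.induce {p}ᶜ).Preconnected

lemma IsTwoConnected.isMinor_of_sup_edge (hH : IsTwoConnected H) (huv : ¬ G.Reachable u v)
    (h : IsMinor H (G ⊔ edge u v)) : IsMinor H G := by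
  rw [isMinor_iff_exists_isMinorModel] at h ⊢
  obtain ⟨f, hf⟩ := h
  have hf' : IsMinorModel H (G ⊔ edge v u) f := edge_comm u v ▸ hf
  by_cases hu : ∃ p, u ∈ f p
  swap
  · exact ⟨f, hf.of_sup_edge (not_exists.1 hu)⟩
  by_cases hv : ∃ q, v ∈ f q
  swap
  · exact ⟨f, hf'.of_sup_edge (not_exists.1 hv)⟩
  obtain ⟨p, hu⟩ := hu
  obtain ⟨q, hv⟩ := hv
  obtain ⟨r, hrp, hrq⟩ := ENat.exists_ne_ne_of_three_le hH.three_le_card p q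
  obtain ⟨z, hz⟩ := hf.nonempty r
  have reachable_of_ne_p {a : α} {x : β} (ha : a ≠ p) (hx : x ∈ f a) : G.Reachable z x :=
    hf.reachable_of_sup_edge (hH.preconnected_induce_compl p) hu hrp ha hz hx
  have reachable_of_ne_q {a : α} {x : β} (ha : a ≠ q) (hx : x ∈ f a) : G.Reachable z x :=
    hf'.reachable_of_sup_edge (hH.preconnected_induce_compl q) hv hrq ha hz hx
  obtain rfl : p = q := by
    by_contra hpq
    exact huv ((reachable_of_ne_q hpq hu).symm.trans (reachable_of_ne_p (Ne.symm hpq) hv))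
  by_cases huz : G.Reachable u z
  · have hvz : ¬ G.Reachable v z := fun hvz => huv (huz.trans hvz.symm)
    exact ⟨_, hf'.inter_of_sup_edge (fun h => huv h.symm) hv hu fun a ha x hx hvx =>
      hvz (hvx.trans (reachable_of_ne_p ha hx).symm)⟩
  · exact ⟨_, hf.inter_of_sup_edge huv hu hv fun a ha x hx hux =>
      huz (hux.trans (reachable_of_ne_p ha hx).symm)⟩

lemma isTwoConnected_completeGraph (h : 3 ≤ ENat.card α) : IsTwoConnected (completeGraph α) where
  three_le_card := h
  preconnected_induce_compl p x y := by
    by_cases hxy : x = y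
    · exact hxy ▸ Reachable.refl x
    · exact Adj.reachable fun h => hxy (Subtype.ext h)

lemma isTwoConnected_completeBipartiteGraph [Nontrivial α] [Nontrivial β] :
    IsTwoConnected (completeBipartiteGraph α β) where
  three_le_card := by
    rw [ENat.card_sum]
    refine (by norm_num : (3 : ℕ∞) ≤ 1 + 1 + (1 + 1)).trans (add_le_add ?_ ?_) <;>
      exact Order.add_one_le_of_lt ENat.one_lt_card
  preconnected_induce_compl p := by
    obtain ⟨a₀, ha₀⟩ := Sum.inl_injective (α := α) (β := β) |>.exists_ne p
    obtain ⟨b₀, hb₀⟩ := Sum.inr_injective (α := α) (β := β) |>.exists_ne p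
    have reachable (a b) (ha : Sum.inl a ≠ p) (hb : Sum.inr b ≠ p) :
        ((completeBipartiteGraph α β).induce {p}ᶜ).Reachable ⟨Sum.inl a, ha⟩ ⟨Sum.inr b, hb⟩ :=
      Adj.reachable (Or.inl ⟨rfl, rfl⟩)
    rintro ⟨a | b, hx⟩ ⟨a' | b', hy⟩
    · exact (reachable a b₀ hx hb₀).trans (reachable a' b₀ hy hb₀).symm
    · exact reachable a b' hx hy
    · exact (reachable a' b hy hx).symm
    · exact (reachable a₀ b ha₀ hx).symm.trans (reachable a₀ b' ha₀ hy)

lemma IsPlanar.anti (h : IsPlanar G') (hle : G ≤ G') : IsPlanar G :=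
  ⟨fun hK => h.1 (hK.mono hle), fun hK => h.2 (hK.mono hle)⟩

lemma isLowerSet_setOf_isPlanar : IsLowerSet {G : SimpleGraph β | IsPlanar G} :=
  fun _ _ hle hG => hG.anti hle

lemma IsPlanar.sup_edge (h : IsPlanar G) (huv : ¬ G.Reachable u v) : IsPlanar (G ⊔ edge u v) :=
  ⟨fun hK => h.1 ((isTwoConnected_completeGraph (by simp; norm_num)).isMinor_of_sup_edge huv hK),
    fun hK => h.2 (isTwoConnected_completeBipartiteGraph.isMinor_of_sup_edge huv hK)⟩

end Minors

section EdgeCount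

variable {V : Type*} {G : SimpleGraph V}

lemma edgeCount_eq_card_edgeFinset [Fintype G.edgeSet] : edgeCount G = G.edgeFinset.card :=
  Set.ncard_eq_toFinset_card' _

lemma vertexDegree_eq_degree {v : V} [Fintype (G.neighborSet v)] :
    vertexDegree G v = G.degree v :=
  Set.ncard_eq_toFinset_card' _

lemma edgeSet_sup_edge {u v : V} (huv : u ≠ v) :
    (G ⊔ edge u v).edgeSet = insert s(u, v) G.edgeSet := by
  rw [edgeSet_sup, edgeSet_edge_of_ne huv, Set.union_singleton]

lemma edgeCount_deleteEdges_add [Finite V] {S : Finset (Sym2 V)} (hS : ↑S ⊆ G.edgeSet) :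
    edgeCount (G.deleteEdges S) + S.card = edgeCount G := by
  rw [edgeCount, edgeCount, edgeSet_deleteEdges, ← Set.ncard_coe_finset S]
  exact Set.ncard_sdiff_add_ncard_of_subset hS (Set.toFinite _)

open scoped Classical in
lemma card_covBy_le_edgeCount [Finite V] (s : Finset (SimpleGraph V)) :
    (s.filter fun G' => G'.edgeSet ⋖ G.edgeSet).card ≤ edgeCount G := by
  have subset_image : (s.filter fun G' => G'.edgeSet ⋖ G.edgeSet : Set (SimpleGraph V)) ⊆
      (fun e => G.deleteEdges {e}) '' G.edgeSet := fun G' hG' => by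
    obtain ⟨e, he, hG⟩ := Set.covBy_iff_exists_insert.1 (Finset.mem_filter.1 hG').2
    exact ⟨e, hG ▸ Set.mem_insert e _, edgeSet_injective (by simp [← hG, he])⟩
  rw [← Set.ncard_coe_finset]
  exact (Set.ncard_le_ncard subset_image (Set.toFinite _)).trans
    (Set.ncard_image_le (Set.toFinite _))

/-- The graph joining any two vertices that lie in different components of `G`. -/
def separatedGraph (G : SimpleGraph V) : SimpleGraph V where
  Adj u v := ¬ G.Reachable u v
  symm := ⟨fun _ _ huv hvu => huv hvu.symm⟩
  loopless := ⟨fun v hv => hv (Reachable.refl v)⟩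

variable [Fintype V]

lemma card_le_vertexDegree_separatedGraph (G : SimpleGraph V) (v : V) :
    Fintype.card V ≤ vertexDegree (separatedGraph G) v + (edgeCount G + 1) := by
  classical
  set star := (separatedGraph G).incidenceSet v
  have hconn : (G ⊔ fromEdgeSet star).Connected :=
    connected_iff_exists_forall_reachable _ |>.2 ⟨v, fun w => by
      by_cases hw : G.Reachable v w
      · exact hw.mono le_sup_left
      · exact Adj.reachable (Or.inr ((fromEdgeSet_adj _).2
          ⟨(mem_incidenceSet _ _ _).2 hw, fun h => hw (h ▸ Reachable.refl _)⟩))⟩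
  calc Fintype.card V = Nat.card V := Nat.card_eq_fintype_card.symm
    _ ≤ Nat.card (G ⊔ fromEdgeSet star).edgeSet + 1 := hconn.card_vert_le_card_edgeSet_add_one
    _ ≤ (G.edgeSet ∪ star).ncard + 1 := by
      gcongr
      rw [Nat.card_coe_set_eq, edgeSet_sup, edgeSet_fromEdgeSet]
      exact Set.ncard_le_ncard (Set.union_subset_union_right _ Set.sdiff_subset) (Set.toFinite _)
    _ ≤ edgeCount G + star.ncard + 1 := by gcongr; exact Set.ncard_union_le _ _
    _ = vertexDegree (separatedGraph G) v + (edgeCount G + 1) := by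
      rw [vertexDegree_eq_degree, ← card_incidenceSet_eq_degree, ← Nat.card_eq_fintype_card,
        Nat.card_coe_set_eq]
      ring

lemma card_mul_sub_le_two_mul_edgeCount_separatedGraph (G : SimpleGraph V) :
    (Fintype.card V : ℝ) * (Fintype.card V - (edgeCount G + 1)) ≤
      2 * edgeCount (separatedGraph G) := by
  classical
  have le_degree (v : V) :
      (Fintype.card V : ℝ) - (edgeCount G + 1) ≤ (separatedGraph G).degree v := by
    rw [sub_le_iff_le_add, ← vertexDegree_eq_degree]
    exact_mod_cast card_le_vertexDegree_separatedGraph G v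
  calc (Fintype.card V : ℝ) * (Fintype.card V - (edgeCount G + 1))
      ≤ ∑ v, ((separatedGraph G).degree v : ℝ) := by
        rw [← nsmul_eq_mul]
        exact Finset.card_nsmul_le_sum _ _ _ fun v _ => le_degree v
    _ = 2 * edgeCount (separatedGraph G) := by
        rw [edgeCount_eq_card_edgeFinset]
        exact_mod_cast (separatedGraph G).sum_degrees_eq_twice_card_edges

end EdgeCount

section BridgeAddable

variable {V : Type*} {𝒬 : Set (SimpleGraph V)}

/-- A class of graphs is bridge-addable if it is closed under joining two components by an edge
(a notion of McDiarmid, Steger and Welsh). -/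
def BridgeAddable (𝒬 : Set (SimpleGraph V)) : Prop :=
  ∀ ⦃G : SimpleGraph V⦄ ⦃u v : V⦄, G ∈ 𝒬 → ¬ G.Reachable u v → G ⊔ edge u v ∈ 𝒬

lemma bridgeAddable_setOf_isPlanar : BridgeAddable {G : SimpleGraph V | IsPlanar G} :=
  fun _ _ _ h huv => h.sup_edge huv

lemma BridgeAddable.inter {𝒬' : Set (SimpleGraph V)} (h : BridgeAddable 𝒬)
    (h' : BridgeAddable 𝒬') : BridgeAddable (𝒬 ∩ 𝒬') :=
  fun _ _ _ hG huv => ⟨h hG.1 huv, h' hG.2 huv⟩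

variable [Finite V]

/-- The graphs with exactly `m` edges in the class `𝒬`. -/
noncomputable def graphsWith (𝒬 : Set (SimpleGraph V)) (m : ℕ) : Finset (SimpleGraph V) :=
  (Set.toFinite {G ∈ 𝒬 | edgeCount G = m}).toFinset

@[simp]
lemma mem_graphsWith {m : ℕ} {G : SimpleGraph V} :
    G ∈ graphsWith 𝒬 m ↔ G ∈ 𝒬 ∧ edgeCount G = m := by
  simp [graphsWith]

end BridgeAddable

namespace BridgeAddable

variable {V : Type*} {𝒬 : Set (SimpleGraph V)} {A : ℝ} {m : ℕ}

lemma exists_edgeSet_eq_insert [Finite V] (h𝒬 : BridgeAddable 𝒬) {G : SimpleGraph V}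
    (hG : G ∈ graphsWith 𝒬 m) {e : Sym2 V} (he : e ∈ (separatedGraph G).edgeSet) :
    e ∉ G.edgeSet ∧ ∃ G' ∈ graphsWith 𝒬 (m + 1), G'.edgeSet = insert e G.edgeSet := by
  induction e with
  | _ u v =>
    have huv : ¬ G.Reachable u v := he
    have hnot : s(u, v) ∉ G.edgeSet := fun h => huv (Adj.reachable h)
    have hedges := edgeSet_sup_edge (G := G) ((separatedGraph G).ne_of_adj he)
    rw [mem_graphsWith] at hG
    refine ⟨hnot, G ⊔ edge u v, mem_graphsWith.2 ⟨h𝒬 hG.1 huv, ?_⟩, hedges⟩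
    rw [edgeCount, hedges, Set.ncard_insert_of_notMem hnot (Set.toFinite _), ← hG.2, edgeCount]

open scoped Classical in
lemma edgeCount_separatedGraph_le_card_covBy [Finite V] (h𝒬 : BridgeAddable 𝒬) {G : SimpleGraph V}
    (hG : G ∈ graphsWith 𝒬 m) :
    edgeCount (separatedGraph G) ≤
      ((graphsWith 𝒬 (m + 1)).filter fun G' => G.edgeSet ⋖ G'.edgeSet).card := by
  choose! hnot φ hφ hedges using fun e => h𝒬.exists_edgeSet_eq_insert hG (e := e)
  rw [edgeCount, ← Set.ncard_coe_finset]
  refine Set.ncard_le_ncard_of_injOn φ (fun e he => ?_) (fun e he e' he' h => ?_)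
    (Finset.finite_toSet _)
  · exact Finset.mem_filter.2
      ⟨hφ e he, Set.covBy_iff_exists_insert.2 ⟨e, hnot e he, (hedges e he).symm⟩⟩
  · exact (Set.insert_inj (hnot e he)).1 (by rw [← hedges e he, ← hedges e' he', h])

-- Double counting of the pairs `(G, G')` in which `G'` arises from `G` by adding an edge.
lemma card_graphsWith_mul_le_succ [Fintype V] (h𝒬 : BridgeAddable 𝒬) (m : ℕ) :
    (graphsWith 𝒬 m).card * ((Fintype.card V : ℝ) * (Fintype.card V - (m + 1)) / 2) ≤
      (graphsWith 𝒬 (m + 1)).card * (m + 1) := by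
  classical
  refine (nsmul_eq_mul _ _).symm.trans_le <| (Finset.card_nsmul_le_card_nsmul
    (fun G G' : SimpleGraph V => G.edgeSet ⋖ G'.edgeSet) (fun G hG => ?_)
    (fun G' hG' => ?_)).trans_eq (nsmul_eq_mul _ _)
  · have hsep := card_mul_sub_le_two_mul_edgeCount_separatedGraph G
    rw [(mem_graphsWith.1 hG).2] at hsep
    have hcov : (edgeCount (separatedGraph G) : ℝ) ≤ _ :=
      Nat.cast_le.2 (h𝒬.edgeCount_separatedGraph_le_card_covBy hG)
    exact (div_le_iff₀' two_pos).2 hsep |>.trans hcov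
  · have hcov := card_covBy_le_edgeCount (G := G') (graphsWith 𝒬 m)
    rw [(mem_graphsWith.1 hG').2] at hcov
    exact_mod_cast hcov

lemma card_graphsWith_le_succ [Fintype V] (h𝒬 : BridgeAddable 𝒬) (hA : A < 1)
    (hm : (m + 1 : ℕ) ≤ A * Fintype.card V) :
    ((graphsWith 𝒬 m).card : ℝ) ≤
      2 / ((1 - A) * Fintype.card V) * (graphsWith 𝒬 (m + 1)).card := by
  have hcount := h𝒬.card_graphsWith_mul_le_succ m
  push_cast at hm
  set n := (Fintype.card V : ℝ)
  have hA' : 0 < 1 - A := sub_pos.2 hA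
  have hn : 0 < n := (Nat.cast_nonneg _).lt_of_ne' fun h : n = 0 => by
    rw [h, mul_zero] at hm
    linarith [m.cast_nonneg (α := ℝ)]
  have hmn : (m : ℝ) + 1 ≤ n := hm.trans (mul_le_of_le_one_left hn.le hA.le)
  rw [div_mul_eq_mul_div, le_div_iff₀ (mul_pos hA' hn)]
  refine le_of_mul_le_mul_right ?_ (half_pos hn)
  calc (graphsWith 𝒬 m).card * ((1 - A) * n) * (n / 2)
      = (graphsWith 𝒬 m).card * (n * (n - A * n) / 2) := by ring
    _ ≤ (graphsWith 𝒬 m).card * (n * (n - (m + 1)) / 2) := by gcongr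
    _ ≤ (graphsWith 𝒬 (m + 1)).card * (m + 1) := hcount
    _ ≤ (graphsWith 𝒬 (m + 1)).card * n := by gcongr
    _ = 2 * (graphsWith 𝒬 (m + 1)).card * (n / 2) := by ring

lemma card_graphsWith_le_add [Fintype V] (h𝒬 : BridgeAddable 𝒬) (hA : A < 1) (j : ℕ)
    (hm : (m + j : ℕ) ≤ A * Fintype.card V) :
    ((graphsWith 𝒬 m).card : ℝ) ≤
      (2 / ((1 - A) * Fintype.card V)) ^ j * (graphsWith 𝒬 (m + j)).card := by
  have : 0 < 1 - A := sub_pos.2 hA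
  induction j with
  | zero => simp
  | succ j ih =>
    calc ((graphsWith 𝒬 m).card : ℝ)
        ≤ (2 / ((1 - A) * Fintype.card V)) ^ j * (graphsWith 𝒬 (m + j)).card :=
          ih (le_trans (by gcongr; simp) hm)
      _ ≤ (2 / ((1 - A) * Fintype.card V)) ^ j *
          (2 / ((1 - A) * Fintype.card V) * (graphsWith 𝒬 (m + j + 1)).card) := by
          gcongr
          exact h𝒬.card_graphsWith_le_succ hA hm
      _ = (2 / ((1 - A) * Fintype.card V)) ^ (j + 1) * (graphsWith 𝒬 (m + (j + 1))).card := by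
          rw [pow_succ, mul_assoc, add_assoc]

-- `G ↦ G - S` is injective on the graphs containing `S` and drops the number of edges by `|S|`.
lemma card_graphsWith_deleteEdges_le [Fintype V] (h𝒬 : BridgeAddable 𝒬) (hA : A < 1)
    (hm : m ≤ A * Fintype.card V) (S : Finset (Sym2 V)) :
    ((graphsWith {G | ↑S ⊆ G.edgeSet ∧ G.deleteEdges S ∈ 𝒬} m).card : ℝ) ≤
      (2 / ((1 - A) * Fintype.card V)) ^ S.card * (graphsWith 𝒬 m).card := by
  have : 0 < 1 - A := sub_pos.2 hA
  obtain hempty | ⟨G₀, hG₀⟩ :=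
    (graphsWith {G | ↑S ⊆ G.edgeSet ∧ G.deleteEdges S ∈ 𝒬} m).eq_empty_or_nonempty
  · rw [hempty, Finset.card_empty, Nat.cast_zero]
    positivity
  obtain ⟨l, rfl⟩ : ∃ l, m = l + S.card := by
    obtain ⟨⟨hS, -⟩, rfl⟩ := mem_graphsWith.1 hG₀
    exact ⟨_, (edgeCount_deleteEdges_add hS).symm⟩
  refine le_trans ?_ (h𝒬.card_graphsWith_le_add hA S.card hm)
  refine Nat.cast_le.2 (Finset.card_le_card_of_injOn (fun G => G.deleteEdges (S : Set (Sym2 V)))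
    (fun G hG => ?_) (fun G hG G' hG' (h : G.deleteEdges S = G'.deleteEdges S) => ?_))
  · obtain ⟨⟨hS, hmem⟩, hcount⟩ := mem_graphsWith.1 hG
    exact mem_graphsWith.2 ⟨hmem,
      Nat.add_right_cancel ((edgeCount_deleteEdges_add hS).trans hcount)⟩
  · obtain ⟨⟨hS, -⟩, -⟩ := mem_graphsWith.1 hG
    obtain ⟨⟨hS', -⟩, -⟩ := mem_graphsWith.1 hG'
    rw [← edgeSet_inj, edgeSet_deleteEdges, edgeSet_deleteEdges] at h
    rw [← edgeSet_inj, ← Set.sdiff_union_of_subset hS, ← Set.sdiff_union_of_subset hS', h]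

end BridgeAddable

section Packings

variable {α : Type*}

open scoped Classical in
/-- The subfamilies of `𝒮` consisting of pairwise disjoint sets. -/
noncomputable def packings (𝒮 : Finset (Finset α)) : Finset (Finset (Finset α)) :=
  𝒮.powerset.filter fun 𝒞 => (𝒞 : Set (Finset α)).PairwiseDisjoint id

lemma mem_packings {𝒮 𝒞 : Finset (Finset α)} :
    𝒞 ∈ packings 𝒮 ↔ 𝒞 ⊆ 𝒮 ∧ (𝒞 : Set (Finset α)).PairwiseDisjoint id := by
  simp [packings]

lemma packings_mono {𝒮 𝒯 : Finset (Finset α)} (h : 𝒮 ⊆ 𝒯) : packings 𝒮 ⊆ packings 𝒯 := by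
  intro 𝒞 h𝒞
  rw [mem_packings] at h𝒞 ⊢
  exact ⟨h𝒞.1.trans h, h𝒞.2⟩

lemma exists_mem_packings_forall_not_disjoint [DecidableEq α] (𝒮 : Finset (Finset α))
    (h𝒮 : ∀ C ∈ 𝒮, C.Nonempty) :
    ∃ 𝒞 ∈ packings 𝒮, ∀ C ∈ 𝒮, ¬ Disjoint C (𝒞.biUnion id) := by
  obtain ⟨𝒞, h𝒞, hmax⟩ := (packings 𝒮).exists_maximal ⟨∅, mem_packings.2 (by simp)⟩
  obtain ⟨hsub, hdisj⟩ := mem_packings.1 h𝒞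
  refine ⟨𝒞, h𝒞, fun C hC hC𝒞 => ?_⟩
  have hinsert : insert C 𝒞 ∈ packings 𝒮 := by
    rw [mem_packings, Finset.coe_insert]
    exact ⟨Finset.insert_subset hC hsub,
      hdisj.insert fun D hD _ => (Finset.disjoint_biUnion_right _ _ _).1 hC𝒞 D hD⟩
  have hmem : C ∈ 𝒞 := hmax hinsert (Finset.subset_insert C 𝒞) (Finset.mem_insert_self C 𝒞)
  obtain ⟨e, he⟩ := h𝒮 C hC
  exact Finset.disjoint_left.1 hC𝒞 he (Finset.mem_biUnion.2 ⟨C, hmem, he⟩)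

lemma sum_packings_pow_card_le_exp [DecidableEq α] (𝒮 : Finset (Finset α)) {x : ℝ} (hx : 0 ≤ x) :
    ∑ 𝒞 ∈ packings 𝒮, x ^ (𝒞.biUnion id).card ≤ Real.exp (∑ C ∈ 𝒮, x ^ C.card) :=
  calc ∑ 𝒞 ∈ packings 𝒮, x ^ (𝒞.biUnion id).card
      = ∑ 𝒞 ∈ packings 𝒮, ∏ C ∈ 𝒞, x ^ C.card :=
        Finset.sum_congr rfl fun 𝒞 h𝒞 => by
          rw [Finset.card_biUnion (mem_packings.1 h𝒞).2, Finset.prod_pow_eq_pow_sum]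
          rfl
    _ ≤ ∑ 𝒞 ∈ 𝒮.powerset, ∏ C ∈ 𝒞, x ^ C.card :=
        Finset.sum_le_sum_of_subset_of_nonneg
          (fun 𝒞 h𝒞 => Finset.mem_powerset.2 (mem_packings.1 h𝒞).1) fun _ _ _ => by positivity
    _ = ∏ C ∈ 𝒮, (1 + x ^ C.card) := (Finset.prod_one_add _).symm
    _ ≤ Real.exp (∑ C ∈ 𝒮, x ^ C.card) :=
        Real.prod_one_add_le_exp_sum 𝒮 fun _ => by positivity

end Packings

section ShortCycles

variable {V : Type*} {G G' : SimpleGraph V} {k : ℕ}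

lemma egirth_le_iff_exists_isCycle :
    G.egirth ≤ k ↔ ∃ (v : V) (c : G.Walk v v), c.IsCycle ∧ c.length ≤ k := by
  refine ⟨fun h => ?_, fun ⟨v, c, hc, hck⟩ => (egirth_le_length hc).trans (Nat.cast_le.2 hck)⟩
  have hG : ¬ G.IsAcyclic := fun hG => by simp [egirth_eq_top.2 hG] at h
  obtain ⟨v, c, hc, hcG⟩ := exists_egirth_eq_length.2 hG
  exact ⟨v, c, hc, Nat.cast_le.1 (hcG ▸ h)⟩

lemma egirth_sup_edge {u v : V} (huv : ¬ G.Reachable u v) : (G ⊔ edge u v).egirth = G.egirth := by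
  refine (egirth_anti le_sup_left).antisymm (le_egirth.2 fun w c hc => ?_)
  have hbridge : (G ⊔ edge u v).IsBridge s(u, v) := isBridge_sup_edge.2 (.of_not_reachable huv)
  have edges_subset (e : Sym2 V) (he : e ∈ c.edges) : e ∈ G.edgeSet := by
    have he' := c.edges_subset_edgeSet he
    rw [edgeSet_sup_edge (by rintro rfl; exact huv (.refl u))] at he'
    exact he'.resolve_left fun h => hbridge.notMem_edges_of_isCycle hc (h ▸ he)
  simpa using egirth_le_length (hc.transfer edges_subset)

lemma bridgeAddable_setOf_lt_egirth (k : ℕ∞) : BridgeAddable {G : SimpleGraph V | k < G.egirth} :=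
  fun _ _ _ hG huv => hG.trans_eq (egirth_sup_edge huv).symm

variable [Finite V]

/-- The edge sets of the cycles of length at most `k` in `G`. -/
noncomputable def shortCycles (k : ℕ) (G : SimpleGraph V) : Finset (Finset (Sym2 V)) :=
  (Set.toFinite {C : Finset (Sym2 V) | ∃ (v : V) (c : G.Walk v v),
    c.IsCycle ∧ c.length ≤ k ∧ C = c.edgeSet}).toFinset

lemma mem_shortCycles {C : Finset (Sym2 V)} : C ∈ shortCycles k G ↔
    ∃ (v : V) (c : G.Walk v v), c.IsCycle ∧ c.length ≤ k ∧ C = c.edgeSet := by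
  simp [shortCycles]

lemma shortCycles_mono (h : G ≤ G') : shortCycles k G ⊆ shortCycles k G' := fun C hC => by
  obtain ⟨v, c, hc, hck, hC⟩ := mem_shortCycles.1 hC
  exact mem_shortCycles.2 ⟨v, c.mapLe h, hc.mapLe h, by simpa using hck, by simpa using hC⟩

lemma coe_subset_edgeSet_of_mem_shortCycles {C : Finset (Sym2 V)} (hC : C ∈ shortCycles k G) :
    ↑C ⊆ G.edgeSet := by
  obtain ⟨v, c, -, -, hC⟩ := mem_shortCycles.1 hC
  exact hC ▸ c.edges_subset_edgeSet

lemma shortCycles_nonempty_of_egirth_le (h : G.egirth ≤ k) : (shortCycles k G).Nonempty := by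
  classical
  obtain ⟨v, c, hc, hck⟩ := egirth_le_iff_exists_isCycle.1 h
  exact ⟨c.edges.toFinset, mem_shortCycles.2 ⟨v, c, hc, hck, by ext; simp⟩⟩

lemma nonempty_of_mem_shortCycles {C : Finset (Sym2 V)} (hC : C ∈ shortCycles k G) :
    C.Nonempty := by
  obtain ⟨v, c, hc, -, hC⟩ := mem_shortCycles.1 hC
  obtain ⟨e, he⟩ := List.exists_mem_of_ne_nil c.edges (by simpa using hc.not_nil)
  exact ⟨e, Finset.mem_coe.1 (hC ▸ he)⟩

open scoped Classical in
lemma exists_mem_packings_shortCycles_lt_egirth (k : ℕ) (G : SimpleGraph V) :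
    ∃ 𝒞 ∈ packings (shortCycles k G),
      k < (G.deleteEdges (𝒞.biUnion id : Finset (Sym2 V))).egirth := by
  obtain ⟨𝒞, h𝒞, hmeets⟩ := exists_mem_packings_forall_not_disjoint (shortCycles k G)
    fun C hC => nonempty_of_mem_shortCycles hC
  refine ⟨𝒞, h𝒞, lt_of_not_ge fun hle => ?_⟩
  obtain ⟨C, hC⟩ := shortCycles_nonempty_of_egirth_le hle
  have hsub := coe_subset_edgeSet_of_mem_shortCycles hC
  rw [edgeSet_deleteEdges] at hsub
  exact hmeets C (shortCycles_mono (deleteEdges_le _) hC)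
    (Finset.disjoint_coe.1 (Set.disjoint_of_subset_left hsub disjoint_sdiff_self_left))

open scoped Classical in
lemma coe_biUnion_subset_edgeSet {𝒞 : Finset (Finset (Sym2 V))} (h𝒞 : 𝒞 ⊆ shortCycles k G) :
    ((𝒞.biUnion id : Finset (Sym2 V)) : Set (Sym2 V)) ⊆ G.edgeSet := by
  simpa using fun C hC => coe_subset_edgeSet_of_mem_shortCycles (h𝒞 hC)

end ShortCycles

section RemovingShortCycles

variable {V : Type*} [Fintype V] {𝒬 : Set (SimpleGraph V)} {A : ℝ} {m : ℕ}

open scoped Classical in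
lemma BridgeAddable.card_graphsWith_le_exp_sum_shortCycles_mul (h𝒬 : BridgeAddable 𝒬)
    (hlower : IsLowerSet 𝒬) (hA : A < 1) (hm : m ≤ A * Fintype.card V) (k : ℕ) :
    ((graphsWith 𝒬 m).card : ℝ) ≤
      Real.exp (∑ C ∈ shortCycles k (⊤ : SimpleGraph V),
        (2 / ((1 - A) * Fintype.card V)) ^ C.card) *
      (graphsWith (𝒬 ∩ {G | k < G.egirth}) m).card := by
  have hx : 0 ≤ 2 / ((1 - A) * Fintype.card V) := by
    have := sub_pos.2 hA
    positivity
  set x := 2 / ((1 - A) * Fintype.card V)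
  set 𝒬' := 𝒬 ∩ {G | k < G.egirth}
  have h𝒬' : BridgeAddable 𝒬' := h𝒬.inter (bridgeAddable_setOf_lt_egirth k)
  let containing (S : Finset (Sym2 V)) : Finset (SimpleGraph V) :=
    graphsWith {G | ↑S ⊆ G.edgeSet ∧ G.deleteEdges S ∈ 𝒬'} m
  have subset_biUnion : graphsWith 𝒬 m ⊆
      (packings (shortCycles k ⊤)).biUnion fun 𝒞 => containing (𝒞.biUnion id) := fun G hG => by
    obtain ⟨hG, hGm⟩ := mem_graphsWith.1 hG
    obtain ⟨𝒞, h𝒞, hgirth⟩ := exists_mem_packings_shortCycles_lt_egirth k G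
    refine Finset.mem_biUnion.2 ⟨𝒞, packings_mono (shortCycles_mono le_top) h𝒞, ?_⟩
    exact mem_graphsWith.2 ⟨⟨coe_biUnion_subset_edgeSet (mem_packings.1 h𝒞).1,
      hlower (deleteEdges_le _) hG, hgirth⟩, hGm⟩
  calc ((graphsWith 𝒬 m).card : ℝ)
      ≤ ∑ 𝒞 ∈ packings (shortCycles k ⊤), ((containing (𝒞.biUnion id)).card : ℝ) := by
        exact_mod_cast (Finset.card_le_card subset_biUnion).trans Finset.card_biUnion_le
    _ ≤ ∑ 𝒞 ∈ packings (shortCycles k ⊤), x ^ (𝒞.biUnion id).card * (graphsWith 𝒬' m).card :=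
        Finset.sum_le_sum fun 𝒞 _ => h𝒬'.card_graphsWith_deleteEdges_le hA hm _
    _ ≤ _ := by
        rw [← Finset.sum_mul]
        gcongr
        exact sum_packings_pow_card_le_exp _ hx

end RemovingShortCycles

section CountingCycles

variable {V : Type*} {G : SimpleGraph V} {k : ℕ}

lemma getVert_finRotate {v : V} (c : G.Walk v v) (i : Fin c.length) :
    c.getVert (finRotate c.length i) = c.getVert (i + 1) := by
  obtain ⟨r, hr⟩ := Nat.exists_eq_add_one.2 i.pos
  rcases i with ⟨i, hi⟩
  generalize hl : c.length = l at *
  subst hr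
  by_cases h : i < r
  · rw [finRotate_of_lt h]
  · obtain rfl : i = r := by lia
    rw [finRotate_last']
    simp [← hl]

lemma edgeSet_eq_range_of_closed {v : V} (c : G.Walk v v) :
    c.edgeSet = Set.range fun i : Fin c.length => s(c.getVert i, c.getVert (finRotate _ i)) := by
  ext e
  induction e with
  | _ x y =>
    simp only [getVert_finRotate, Set.mem_range, Fin.exists_iff, exists_prop]
    exact c.mk_mem_edges_iff_exists

lemma ncard_edgeSet_of_isTrail {v w : V} {p : G.Walk v w} (hp : p.IsTrail) :
    p.edgeSet.ncard = p.length := by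
  classical
  rw [← p.coe_edges_toFinset, Set.ncard_coe_finset, List.toFinset_card_of_nodup hp.edges_nodup,
    p.length_edges]

variable [Fintype V]

lemma card_filter_shortCycles_le (k r : ℕ) (G : SimpleGraph V) :
    ((shortCycles k G).filter fun C => C.card = r).card ≤ Fintype.card V ^ r := by
  classical
  have subset_image : (shortCycles k G).filter (fun C => C.card = r) ⊆
      Finset.univ.image fun g : Fin r → V =>
        Finset.univ.image fun i => s(g i, g (finRotate r i)) := fun C hC => by
    obtain ⟨hCk, hCr⟩ := Finset.mem_filter.1 hC
    obtain ⟨v, c, hc, -, hCc⟩ := mem_shortCycles.1 hCk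
    obtain rfl : c.length = r := by
      rw [← hCr, ← Set.ncard_coe_finset, hCc, ncard_edgeSet_of_isTrail hc.isTrail]
    refine Finset.mem_image.2 ⟨fun i => c.getVert i, Finset.mem_univ _, Finset.coe_injective ?_⟩
    rw [hCc, edgeSet_eq_range_of_closed, Finset.coe_image, Finset.coe_univ, Set.image_univ]
  calc ((shortCycles k G).filter fun C => C.card = r).card
      ≤ (Finset.univ : Finset (Fin r → V)).card :=
        (Finset.card_le_card subset_image).trans Finset.card_image_le
    _ = Fintype.card V ^ r := by simp

lemma sum_shortCycles_pow_card_le (k : ℕ) (G : SimpleGraph V) {x : ℝ} (hx : 0 ≤ x) :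
    ∑ C ∈ shortCycles k G, x ^ C.card ≤ ∑ r ∈ Finset.range (k + 1), (Fintype.card V * x) ^ r := by
  have card_mem_range (C : Finset (Sym2 V)) (hC : C ∈ shortCycles k G) :
      C.card ∈ Finset.range (k + 1) := by
    obtain ⟨v, c, hc, hck, hCc⟩ := mem_shortCycles.1 hC
    rw [Finset.mem_range_succ_iff, ← Set.ncard_coe_finset, hCc]
    exact (ncard_edgeSet_of_isTrail hc.isTrail).trans_le hck
  rw [← Finset.sum_fiberwise_of_maps_to card_mem_range]
  refine Finset.sum_le_sum fun r _ => ?_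
  calc ∑ C ∈ shortCycles k G with C.card = r, x ^ C.card
      = ((shortCycles k G).filter fun C => C.card = r).card * x ^ r := by
        rw [← nsmul_eq_mul]
        exact Finset.sum_eq_card_nsmul fun C hC => by rw [(Finset.mem_filter.1 hC).2]
    _ ≤ (Fintype.card V ^ r : ℕ) * x ^ r := by
        gcongr
        exact card_filter_shortCycles_le k r G
    _ = (Fintype.card V * x) ^ r := by rw [Nat.cast_pow, mul_pow]

end CountingCycles

section LargeGirth

lemma BridgeAddable.card_graphsWith_le_exp_mul_card_lt_egirth {V : Type*} [Fintype V]
    {𝒬 : Set (SimpleGraph V)} (h𝒬 : BridgeAddable 𝒬) (hlower : IsLowerSet 𝒬) {A : ℝ} (hA : A < 1)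
    {m : ℕ} (hm : m ≤ A * Fintype.card V) (k : ℕ) :
    ((graphsWith 𝒬 m).card : ℝ) ≤
      Real.exp (∑ r ∈ Finset.range (k + 1), (2 / (1 - A)) ^ r) *
        (graphsWith (𝒬 ∩ {G | k < G.egirth}) m).card := by
  have : 0 < 1 - A := sub_pos.2 hA
  have hx : 0 ≤ 2 / ((1 - A) * Fintype.card V) := by positivity
  have card_mul_le : Fintype.card V * (2 / ((1 - A) * Fintype.card V)) ≤ 2 / (1 - A) := by
    rw [← div_div, mul_div_left_comm]
    exact mul_le_of_le_one_right (by positivity) (div_self_le_one _)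
  refine (h𝒬.card_graphsWith_le_exp_sum_shortCycles_mul hlower hA hm k).trans ?_
  gcongr
  refine (sum_shortCycles_pow_card_le k ⊤ hx).trans ?_
  gcongr

lemma planarProb_egirth_le (n : ℕ) {A : ℝ} (hA : A < 1) {m : ℕ} (hm : m ≤ A * n) (k : ℕ) :
    planarProb n m (fun G => G.egirth ≤ k) ≤
      1 - Real.exp (-∑ r ∈ Finset.range (k + 1), (2 / (1 - A)) ^ r) := by
  have : 0 < 1 - A := sub_pos.2 hA
  set 𝒬 := {G : SimpleGraph (Fin n) | IsPlanar G}
  set T := ∑ r ∈ Finset.range (k + 1), (2 / (1 - A)) ^ r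
  have hT : 0 ≤ T := Finset.sum_nonneg fun _ _ => by positivity
  have ncard_eq (ℛ : Set (SimpleGraph (Fin n))) :
      {G ∈ ℛ | edgeCount G = m}.ncard = (graphsWith ℛ m).card :=
    Set.ncard_eq_toFinset_card _
  have hsplit : ({G ∈ planarSet n m | G.egirth ≤ k}.ncard : ℝ) +
      (graphsWith (𝒬 ∩ {G | k < G.egirth}) m).card = (planarSet n m).ncard := by
    rw [← ncard_eq, ← Nat.cast_add, ← Set.ncard_inter_add_ncard_sdiff_eq_ncard (planarSet n m)
      {G | G.egirth ≤ k} (Set.toFinite _)]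
    congr 3
    ext G
    simp [planarSet, 𝒬, and_right_comm]
  have hlarge : ((planarSet n m).ncard : ℝ) ≤
      Real.exp T * (graphsWith (𝒬 ∩ {G | k < G.egirth}) m).card := by
    rw [show (planarSet n m).ncard = _ from ncard_eq 𝒬]
    exact bridgeAddable_setOf_isPlanar.card_graphsWith_le_exp_mul_card_lt_egirth
      isLowerSet_setOf_isPlanar hA (by simpa using hm) k
  refine div_le_of_le_mul₀ (Nat.cast_nonneg _)
    (sub_nonneg.2 (Real.exp_le_one_iff.2 (neg_nonpos.2 hT))) ?_
  rw [← hsplit] at hlarge ⊢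
  have := mul_le_mul_of_nonneg_left hlarge (Real.exp_pos (-T)).le
  rw [← mul_assoc, ← Real.exp_add, neg_add_cancel, Real.exp_zero, one_mul] at this
  linarith

end LargeGirth

theorem short_cycle_not_whp (k : ℕ) (hk : 0 < k) (A : ℝ) (hA : A < 1) (m : ℕ → ℕ)
    (hm : ∀ n : ℕ, (m n : ℝ) ≤ A * (n : ℝ)) :
    limsup (fun n : ℕ =>
        planarProb n (m n) fun G =>
          ∃ (v : Fin n) (c : G.Walk v v), c.IsCycle ∧ c.length ≤ k)
      atTop < 1 := by
  simp only [← egirth_le_iff_exists_isCycle]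
  have hcobdd : IsCoboundedUnder (· ≤ ·) atTop fun n =>
      planarProb n (m n) fun G => G.egirth ≤ k :=
    isCoboundedUnder_le_of_le atTop fun n => div_nonneg (Nat.cast_nonneg _) (Nat.cast_nonneg _)
  calc limsup (fun n => planarProb n (m n) fun G => G.egirth ≤ k) atTop
      ≤ 1 - Real.exp (-∑ r ∈ Finset.range (k + 1), (2 / (1 - A)) ^ r) :=
        limsup_le_of_le hcobdd (.of_forall fun n => planarProb_egirth_le n hA (hm n) k)
    _ < 1 := sub_lt_self 1 (Real.exp_pos _)
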